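/- arXiv:1402.2092 — 2 statements merged into one kernel-verified Lean document; each statement's English description precedes it below -/
import Mathlib

section
/- Let f be a nonnegative, monotone, submodular set function on a finite ground set X, and let S_0 = ∅, S_{t+1} = S_t ∪ {x_t} where x_t ∈ argmax_{x∈X} f(S_t ∪ {x}) is a greedily chosen element. Then for all nonnegative integers k ≥ 1 and ℓ: f(S_ℓ) ≥ (1 − e^{−ℓ/k}) · max_{S⊆X, |S|=k} f(S). -/
open scoped Classical BigOperators

/-!
Fix a competitor `T` with at most `k` elements. By submodularity, the gain from adding all of `T` to
`S t` is at most the sum of the gains from adding its elements one at a time, hence at most `k`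
times the gain of the greedy step. So each greedy step closes at least a `1 / k` fraction of the gap
`f T - f (S t)`; after `ℓ` steps the gap has shrunk by the factor `(1 - 1 / k) ^ ℓ ≤ exp (-ℓ / k)`.
-/

section

variable {X : Type*} [DecidableEq X]

/-- Submodularity of a set function, as diminishing returns: the marginal gain of a new element
decreases as the set it is added to grows. -/
def IsSubmodular {M : Type*} [Sub M] [LE M] (f : Finset X → M) : Prop :=
  ∀ (A B : Finset X) (x : X), A ⊆ B → x ∉ B → f (insert x B) - f B ≤ f (insert x A) - f A

/-- A run of the greedy algorithm for maximizing `f`: each set arises from its predecessor by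
inserting an element which maximizes the resulting value of `f`. The starting set `S 0` is
arbitrary, and the inserted element may already be present. -/
def IsGreedy {M : Type*} [LE M] (f : Finset X → M) (S : ℕ → Finset X) : Prop :=
  ∀ t : ℕ, ∃ x : X, S (t + 1) = insert x (S t) ∧ ∀ y : X, f (insert y (S t)) ≤ f (insert x (S t))

namespace IsSubmodular

variable {M : Type*} [AddCommGroup M] [PartialOrder M] [IsOrderedAddMonoid M] {f : Finset X → M}

theorem union_sub_le_sum (hf : IsSubmodular f) (A T : Finset X) :
    f (A ∪ T) - f A ≤ ∑ x ∈ T, (f (insert x A) - f A) := by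
  induction T using Finset.induction_on with
  | empty => simp
  | insert a T haT ih =>
    have gain_le : f (insert a (A ∪ T)) - f (A ∪ T) ≤ f (insert a A) - f A := by
      by_cases haA : a ∈ A
      · simp [haA]
      · exact hf A (A ∪ T) a Finset.subset_union_left (by simp [haA, haT])
    calc f (A ∪ insert a T) - f A
        = (f (insert a (A ∪ T)) - f (A ∪ T)) + (f (A ∪ T) - f A) := by
          rw [Finset.union_insert, sub_add_sub_cancel]
      _ ≤ (f (insert a A) - f A) + ∑ x ∈ T, (f (insert x A) - f A) := add_le_add gain_le ih
      _ = ∑ x ∈ insert a T, (f (insert x A) - f A) := by rw [Finset.sum_insert haT]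

theorem sub_le_card_nsmul (hf : IsSubmodular f) (hmono : Monotone f) {A T : Finset X} {c : M}
    (hc : ∀ x ∈ T, f (insert x A) ≤ c) : f T - f A ≤ T.card • (c - f A) :=
  calc f T - f A ≤ f (A ∪ T) - f A := sub_le_sub_right (hmono Finset.subset_union_right) _
    _ ≤ ∑ x ∈ T, (f (insert x A) - f A) := hf.union_sub_le_sum A T
    _ ≤ T.card • (c - f A) :=
      Finset.sum_le_card_nsmul _ _ _ fun x hx ↦ sub_le_sub_right (hc x hx) _

end IsSubmodular

namespace IsGreedy

variable {S : ℕ → Finset X}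

section LE

variable {M : Type*} [LE M] {f : Finset X → M}

theorem apply_insert_le (hS : IsGreedy f S) (t : ℕ) (y : X) :
    f (insert y (S t)) ≤ f (S (t + 1)) := by
  obtain ⟨x, hx, hmax⟩ := hS t
  exact hx ▸ hmax y

theorem monotone (hS : IsGreedy f S) : Monotone S :=
  monotone_nat_of_le_succ fun t ↦ by
    obtain ⟨x, hx, -⟩ := hS t
    exact hx ▸ Finset.subset_insert x (S t)

end LE

variable {T : Finset X} {k : ℕ}

theorem gap_succ_le {𝕜 : Type*} [Field 𝕜] [LinearOrder 𝕜] [IsStrictOrderedRing 𝕜]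
    {f : Finset X → 𝕜} (hS : IsGreedy f S) (hsub : IsSubmodular f) (hmono : Monotone f)
    (hk : 0 < k) (hT : T.card ≤ k) (t : ℕ) :
    f T - f (S (t + 1)) ≤ (1 - (k : 𝕜)⁻¹) * (f T - f (S t)) := by
  have gain_nonneg : 0 ≤ f (S (t + 1)) - f (S t) :=
    sub_nonneg.2 (hmono (hS.monotone t.le_succ))
  have gap_le : f T - f (S t) ≤ k * (f (S (t + 1)) - f (S t)) :=
    calc f T - f (S t) ≤ T.card • (f (S (t + 1)) - f (S t)) :=
          hsub.sub_le_card_nsmul hmono fun x _ ↦ hS.apply_insert_le t x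
      _ ≤ k • (f (S (t + 1)) - f (S t)) := nsmul_le_nsmul_left gain_nonneg hT
      _ = k * (f (S (t + 1)) - f (S t)) := nsmul_eq_mul _ _
  have gap_div_le : (k : 𝕜)⁻¹ * (f T - f (S t)) ≤ f (S (t + 1)) - f (S t) :=
    (inv_mul_le_iff₀ (Nat.cast_pos.2 hk)).2 gap_le
  linarith

theorem gap_le_one_sub_inv_pow_mul {f : Finset X → ℝ} (hS : IsGreedy f S)
    (hsub : IsSubmodular f) (hmono : Monotone f) (hk : 0 < k) (hT : T.card ≤ k) (n : ℕ) :
    f T - f (S n) ≤ (1 - (k : ℝ)⁻¹) ^ n * (f T - f (S 0)) :=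
  le_geom (u := fun t ↦ f T - f (S t)) (sub_nonneg.2 (Nat.cast_inv_le_one k)) n
    fun t _ ↦ hS.gap_succ_le hsub hmono hk hT t

end IsGreedy

theorem one_sub_pow_le_exp_neg_mul {x : ℝ} (hx : x ≤ 1) (n : ℕ) :
    (1 - x) ^ n ≤ Real.exp (-(n * x)) :=
  calc (1 - x) ^ n ≤ Real.exp (-x) ^ n :=
        pow_le_pow_left₀ (sub_nonneg.2 hx) (Real.one_sub_le_exp_neg x) n
    _ = Real.exp (-(n * x)) := by rw [← Real.exp_nat_mul, mul_neg]

theorem stmt_7_general {f : Finset X → ℝ} (hmono : Monotone f) (hsub : IsSubmodular f)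
    {S : ℕ → Finset X} (hS0 : S 0 = ∅) (hS : IsGreedy f S) {k : ℕ} (hk : 0 < k) (ℓ : ℕ)
    {T : Finset X} (hT : T.card ≤ k) :
    (1 - Real.exp (-(ℓ : ℝ) / k)) * f T + Real.exp (-(ℓ : ℝ) / k) * f ∅ ≤ f (S ℓ) := by
  have pow_le_exp : (1 - (k : ℝ)⁻¹) ^ ℓ ≤ Real.exp (-(ℓ : ℝ) / k) := by
    rw [neg_div, div_eq_mul_inv]
    exact one_sub_pow_le_exp_neg_mul (Nat.cast_inv_le_one k) ℓ
  have gap_le : f T - f (S ℓ) ≤ Real.exp (-(ℓ : ℝ) / k) * (f T - f ∅) :=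
    calc f T - f (S ℓ) ≤ (1 - (k : ℝ)⁻¹) ^ ℓ * (f T - f ∅) :=
          hS0 ▸ hS.gap_le_one_sub_inv_pow_mul hsub hmono hk hT ℓ
      _ ≤ Real.exp (-(ℓ : ℝ) / k) * (f T - f ∅) :=
          mul_le_mul_of_nonneg_right pow_le_exp (sub_nonneg.2 (hmono T.empty_subset))
  linarith

end

/-- Greedy maximization of a nonnegative monotone submodular function:
`f(S_ℓ) ≥ (1 - e^{-ℓ/k}) · max_{|S| = k} f(S)`. -/
theorem stmt_7
    {X : Type*} [Fintype X] [DecidableEq X]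
    (f : Finset X → ℝ)
    (hnonneg : ∀ A : Finset X, 0 ≤ f A)
    (hmono : ∀ A B : Finset X, A ⊆ B → f A ≤ f B)
    (hsub : ∀ (A B : Finset X) (x : X), A ⊆ B → x ∉ B →
      f (insert x B) - f B ≤ f (insert x A) - f A)
    (S : ℕ → Finset X) (hS0 : S 0 = ∅)
    (hSgreedy : ∀ t : ℕ, ∃ xt : X, S (t + 1) = insert xt (S t) ∧
      ∀ x : X, f (insert x (S t)) ≤ f (insert xt (S t))) :
    ∀ (k ℓ : ℕ), 1 ≤ k → ∀ T : Finset X, T.card = k →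
      (1 - Real.exp (-(ℓ : ℝ) / (k : ℝ))) * f T ≤ f (S ℓ) := by
  intro k ℓ hk T hT
  linarith [stmt_7_general hmono hsub hS0 hSgreedy hk ℓ hT.le,
    mul_nonneg (Real.exp_nonneg (-(ℓ : ℝ) / k)) (hnonneg ∅)]
end

section
/- In the teacher-update setting, let (ω_t)_{t≥1} be any sequence of learner weights with 0 ≤ ω_t ≤ w_o for all t, and define the learner posterior by q_0 = P0 and q_t(h) = q_{t−1}(h)·ω_t^{(1−ξ_t(h))/2} / (Σ_{h'∈H} q_{t−1}(h')·ω_t^{(1−ξ_t(h'))/2}). Then for every t ≥ 0 the learner's error ratio is dominated by the teacher's: (1 − q_t(h*)) / q_t(h*) ≤ (1 − p_t(h*)) / p_t(h*) = η_t. -/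
open scoped Classical BigOperators

/-!
In odds form a Bayes update is a multiplication: the odds of `h` against the target `h₀` get
multiplied by the likelihood ratio `L h / L h₀`. Posterior odds are therefore prior odds times a
product of likelihood ratios, which is monotone in each factor, and the error ratio
`(1 - p h₀) / p h₀` is the sum of the odds of all hypotheses against `h₀`, minus one. A weighted
learner has likelihood `1` at the target and `w` raised to a nonnegative power elsewhere, so a
smaller weight gives smaller likelihood ratios.
-/

section Posterior

variable {H K : Type*} [Fintype H]

section Field

variable [Field K]

/-- Bayes' rule: the distribution `p` reweighted by the likelihood `L` and normalized. It is `0`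
when the normalizing constant vanishes. -/
def bayesUpdate (p L : H → K) (h : H) : K :=
  p h * L h / ∑ h', p h' * L h'

/-- The posterior after `t` Bayes updates of the prior `P`, where `L s` is the likelihood of the
observation numbered `s + 1`. -/
def posterior (P : H → K) (L : ℕ → H → K) : ℕ → H → K
  | 0 => P
  | t + 1 => bayesUpdate (posterior P L t) (L t)

theorem eq_posterior {P : H → K} {L : ℕ → H → K} {p : ℕ → H → K} (hp0 : p 0 = P)
    (hp : ∀ t, p (t + 1) = bayesUpdate (p t) (L t)) (t : ℕ) : p t = posterior P L t := by
  induction t with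
  | zero => exact hp0
  | succ t ih => rw [hp, ih, posterior]

theorem bayesUpdate_div_bayesUpdate {p L : H → K} (hZ : ∑ h, p h * L h ≠ 0) (h h₀ : H) :
    bayesUpdate p L h / bayesUpdate p L h₀ = p h / p h₀ * (L h / L h₀) := by
  rw [bayesUpdate, bayesUpdate, div_div_div_cancel_right₀ hZ, mul_div_mul_comm]

theorem sum_bayesUpdate {p L : H → K} (hZ : ∑ h, p h * L h ≠ 0) : ∑ h, bayesUpdate p L h = 1 := by
  simp only [bayesUpdate]
  rw [← Finset.sum_div, div_self hZ]

theorem one_sub_div_eq_sum_div_sub_one {p : H → K} {h₀ : H} (hsum : ∑ h, p h = 1)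
    (hp : p h₀ ≠ 0) : (1 - p h₀) / p h₀ = ∑ h, p h / p h₀ - 1 := by
  rw [← Finset.sum_div, hsum, sub_div, div_self hp]

end Field

variable [Field K] [LinearOrder K] [IsStrictOrderedRing K] {h₀ : H}

theorem sum_mul_pos_of_pos_at {p L : H → K} (hp : 0 ≤ p) (hp₀ : 0 < p h₀) (hL : 0 ≤ L)
    (hL₀ : 0 < L h₀) : 0 < ∑ h, p h * L h :=
  Finset.sum_pos' (fun h _ ↦ mul_nonneg (hp h) (hL h))
    ⟨h₀, Finset.mem_univ h₀, mul_pos hp₀ hL₀⟩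

theorem posterior_nonneg {P : H → K} {L : ℕ → H → K} (hP : 0 ≤ P) (hL : ∀ t, 0 ≤ L t) (t : ℕ) :
    0 ≤ posterior P L t := by
  induction t with
  | zero => exact hP
  | succ t ih =>
    have hmul (h : H) : 0 ≤ posterior P L t h * L t h := mul_nonneg (ih h) (hL t h)
    exact fun h ↦ div_nonneg (hmul h) (Finset.sum_nonneg fun h' _ ↦ hmul h')

theorem posterior_pos {P : H → K} {L : ℕ → H → K} (hP : 0 ≤ P) (hP₀ : 0 < P h₀)
    (hL : ∀ t, 0 ≤ L t) (hL₀ : ∀ t, 0 < L t h₀) (t : ℕ) : 0 < posterior P L t h₀ := by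
  induction t with
  | zero => exact hP₀
  | succ t ih =>
    exact div_pos (mul_pos ih (hL₀ t))
      (sum_mul_pos_of_pos_at (posterior_nonneg hP hL t) ih (hL t) (hL₀ t))

theorem sum_posterior_mul_pos {P : H → K} {L : ℕ → H → K} (hP : 0 ≤ P) (hP₀ : 0 < P h₀)
    (hL : ∀ t, 0 ≤ L t) (hL₀ : ∀ t, 0 < L t h₀) (t : ℕ) : 0 < ∑ h, posterior P L t h * L t h :=
  sum_mul_pos_of_pos_at (posterior_nonneg hP hL t) (posterior_pos hP hP₀ hL hL₀ t) (hL t) (hL₀ t)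

theorem sum_posterior {P : H → K} {L : ℕ → H → K} (hP : P ∈ stdSimplex K H) (hP₀ : 0 < P h₀)
    (hL : ∀ t, 0 ≤ L t) (hL₀ : ∀ t, 0 < L t h₀) : ∀ t, ∑ h, posterior P L t h = 1
  | 0 => hP.2
  | t + 1 => sum_bayesUpdate (sum_posterior_mul_pos hP.1 hP₀ hL hL₀ t).ne'

theorem posterior_div_posterior {P : H → K} {L : ℕ → H → K} (hP : 0 ≤ P) (hP₀ : 0 < P h₀)
    (hL : ∀ t, 0 ≤ L t) (hL₀ : ∀ t, 0 < L t h₀) (t : ℕ) (h : H) :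
    posterior P L t h / posterior P L t h₀
      = P h / P h₀ * ∏ s ∈ Finset.range t, L s h / L s h₀ := by
  induction t with
  | zero => simp [posterior]
  | succ t ih =>
    have hZ := sum_posterior_mul_pos hP hP₀ hL hL₀ t
    rw [posterior, bayesUpdate_div_bayesUpdate hZ.ne', ih, Finset.prod_range_succ, mul_assoc]

theorem posterior_div_posterior_le {P Q : H → K} {L M : ℕ → H → K}
    (hP : 0 ≤ P) (hP₀ : 0 < P h₀) (hQ : 0 ≤ Q) (hQ₀ : 0 < Q h₀)
    (hL : ∀ t, 0 ≤ L t) (hL₀ : ∀ t, 0 < L t h₀) (hM : ∀ t, 0 ≤ M t) (hM₀ : ∀ t, 0 < M t h₀)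
    (hQP : ∀ h, Q h / Q h₀ ≤ P h / P h₀) (hML : ∀ t h, M t h / M t h₀ ≤ L t h / L t h₀)
    (t : ℕ) (h : H) :
    posterior Q M t h / posterior Q M t h₀ ≤ posterior P L t h / posterior P L t h₀ := by
  have hratio (s : ℕ) : 0 ≤ M s h / M s h₀ := div_nonneg (hM s h) (hM₀ s).le
  rw [posterior_div_posterior hP hP₀ hL hL₀, posterior_div_posterior hQ hQ₀ hM hM₀]
  exact mul_le_mul (hQP h) (Finset.prod_le_prod (fun s _ ↦ hratio s) fun s _ ↦ hML s h)
    (Finset.prod_nonneg fun s _ ↦ hratio s) (div_nonneg (hP h) hP₀.le)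

theorem one_sub_posterior_div_le {P Q : H → K} {L M : ℕ → H → K}
    (hP : P ∈ stdSimplex K H) (hP₀ : 0 < P h₀) (hQ : Q ∈ stdSimplex K H) (hQ₀ : 0 < Q h₀)
    (hL : ∀ t, 0 ≤ L t) (hL₀ : ∀ t, 0 < L t h₀) (hM : ∀ t, 0 ≤ M t) (hM₀ : ∀ t, 0 < M t h₀)
    (hQP : ∀ h, Q h / Q h₀ ≤ P h / P h₀) (hML : ∀ t h, M t h / M t h₀ ≤ L t h / L t h₀)
    (t : ℕ) :
    (1 - posterior Q M t h₀) / posterior Q M t h₀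
      ≤ (1 - posterior P L t h₀) / posterior P L t h₀ := by
  have hp₀ := posterior_pos hP.1 hP₀ hL hL₀ t
  have hq₀ := posterior_pos hQ.1 hQ₀ hM hM₀ t
  rw [one_sub_div_eq_sum_div_sub_one (sum_posterior hP hP₀ hL hL₀ t) hp₀.ne',
    one_sub_div_eq_sum_div_sub_one (sum_posterior hQ hQ₀ hM hM₀ t) hq₀.ne']
  exact sub_le_sub_right (Finset.sum_le_sum fun h _ ↦
    posterior_div_posterior_le hP.1 hP₀ hQ.1 hQ₀ hL hL₀ hM hM₀ hQP hML t h) 1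

end Posterior

theorem sign_mul_sign_le_one (x y : ℝ) : Real.sign x * Real.sign y ≤ 1 := by
  rcases Real.sign_apply_eq x with hx | hx | hx <;>
    rcases Real.sign_apply_eq y with hy | hy | hy <;> norm_num [hx, hy]

theorem sign_mul_self_eq_one {x : ℝ} (hx : x ≠ 0) : Real.sign x * Real.sign x = 1 := by
  rcases Real.sign_apply_eq_of_ne_zero x hx with h | h <;> norm_num [h]

theorem stmt_12_general {H : Type*} [Fintype H] {hstar : H} {P0 : H → ℝ}
    (hP0 : P0 ∈ stdSimplex ℝ H) (hP0star : 0 < P0 hstar)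
    {ξ : ℕ → H → ℝ} (hξle : ∀ t h, ξ t h ≤ 1) (hξstar : ∀ t, ξ t hstar = 1)
    {w ω : ℕ → ℝ} (hω : ∀ t, 0 ≤ ω t) (hωw : ∀ t, ω t ≤ w t)
    {p : ℕ → H → ℝ} (hp0 : ∀ h, p 0 h = P0 h)
    (hprec : ∀ t h, p (t + 1) h = p t h * w (t + 1) ^ ((1 - ξ (t + 1) h) / 2)
      / ∑ h', p t h' * w (t + 1) ^ ((1 - ξ (t + 1) h') / 2))
    {q : ℕ → H → ℝ} (hq0 : ∀ h, q 0 h = P0 h)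
    (hqrec : ∀ t h, q (t + 1) h = q t h * ω (t + 1) ^ ((1 - ξ (t + 1) h) / 2)
      / ∑ h', q t h' * ω (t + 1) ^ ((1 - ξ (t + 1) h') / 2))
    (t : ℕ) : (1 - q t hstar) / q t hstar ≤ (1 - p t hstar) / p t hstar := by
  let likelihood (u : ℕ → ℝ) (s : ℕ) (h : H) : ℝ := u (s + 1) ^ ((1 - ξ (s + 1) h) / 2)
  have likelihood_nonneg {u : ℕ → ℝ} (hu : ∀ s, 0 ≤ u s) (s : ℕ) : 0 ≤ likelihood u s :=
    fun _ ↦ Real.rpow_nonneg (hu (s + 1)) _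
  have likelihood_star (u : ℕ → ℝ) (s : ℕ) : likelihood u s hstar = 1 := by
    simp [likelihood, hξstar]
  have likelihood_star_pos (u : ℕ → ℝ) (s : ℕ) : 0 < likelihood u s hstar := by
    simp [likelihood_star]
  have likelihood_le (s : ℕ) (h : H) : likelihood ω s h ≤ likelihood w s h :=
    Real.rpow_le_rpow (hω _) (hωw _) (by linarith [hξle (s + 1) h])
  rw [eq_posterior (L := likelihood w) (funext hp0) fun t ↦ funext (hprec t),
    eq_posterior (L := likelihood ω) (funext hq0) fun t ↦ funext (hqrec t)]
  exact one_sub_posterior_div_le hP0 hP0star hP0 hP0star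
    (likelihood_nonneg fun s ↦ (hω s).trans (hωw s)) (likelihood_star_pos w)
    (likelihood_nonneg hω) (likelihood_star_pos ω) (fun _ ↦ le_rfl)
    (fun s h ↦ by simpa only [likelihood_star, div_one] using likelihood_le s h) t

/-- Domination: if the learner updates with weights `ω_t ≤ w_o`, then the learner's
error ratio is dominated by the teacher's: `(1 - q_t(h*))/q_t(h*) ≤ η_t`. -/
theorem stmt_12
    {X H : Type*} [Fintype H]
    (hyp : H → X → ℝ) (hnz : ∀ h x, hyp h x ≠ 0)
    (hstar : H)
    (P0 : H → ℝ) (hP0pos : ∀ h, 0 < P0 h) (hP0sum : ∑ h, P0 h = 1)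
    (w_o : ℝ) (hw0 : 0 ≤ w_o) (hw1 : w_o < 1)
    (ex : ℕ → X)
    (ξ : ℕ → H → ℝ)
    (hξ : ∀ t h, ξ t h = Real.sign (hyp h (ex t)) * Real.sign (hyp hstar (ex t)))
    (p : ℕ → H → ℝ) (hp0 : ∀ h, p 0 h = P0 h)
    (hprec : ∀ (t : ℕ) (h : H),
      p (t + 1) h = p t h * w_o ^ ((1 - ξ (t + 1) h) / 2)
        / ∑ h', p t h' * w_o ^ ((1 - ξ (t + 1) h') / 2))
    (η : ℕ → ℝ)
    (hη : ∀ t : ℕ, η t = (1 - p t hstar) / p t hstar)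
    (ω : ℕ → ℝ) (hω : ∀ t, 0 ≤ ω t ∧ ω t ≤ w_o)
    (q : ℕ → H → ℝ) (hq0 : ∀ h, q 0 h = P0 h)
    (hqrec : ∀ (t : ℕ) (h : H),
      q (t + 1) h = q t h * ω (t + 1) ^ ((1 - ξ (t + 1) h) / 2)
        / ∑ h', q t h' * ω (t + 1) ^ ((1 - ξ (t + 1) h') / 2)) :
    ∀ t : ℕ, (1 - q t hstar) / q t hstar ≤ η t := by
  intro t
  have hξle (t : ℕ) (h : H) : ξ t h ≤ 1 := hξ t h ▸ sign_mul_sign_le_one _ _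
  have hξstar (t : ℕ) : ξ t hstar = 1 := hξ t hstar ▸ sign_mul_self_eq_one (hnz _ _)
  exact hη t ▸ stmt_12_general ⟨fun h ↦ (hP0pos h).le, hP0sum⟩ (hP0pos hstar) hξle hξstar
    (fun t ↦ (hω t).1) (w := fun _ ↦ w_o) (fun t ↦ (hω t).2) hp0 hprec hq0 hqrec t
end
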